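/- Let Γ be a countable discrete group, N a finite normal subgroup, π : Γ → Γ/N the quotient homomorphism, and μ a finitely supported, generating, transient probability measure on Γ with Green function G and Martin kernel K(x,y) = G(yx⁻¹)/G(y). Let μ̄ be the pushforward of μ to Γ/N, with Green function Ḡ and Martin kernel K̄(c,d) = Ḡ(d·c⁻¹)/Ḡ(d). Then the two Martin kernels asymptotically agree: for every x ∈ Γ, the function y ↦ K(x,y) − K̄(π(x), π(y)) vanishes at infinity, i.e. tends to 0 along the cofinite filter on Γ. (This identifies the Martin boundary of Γ with that of Γ/N.) -/

import Mathlib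

/-- Convolution of two (signed) measures on a discrete group:
`(μ ∗ ν)(x) = ∑_y μ(y) ν(y⁻¹ x)`. -/
noncomputable def conv {G : Type*} [Group G] (μ ν : G → ℝ) : G → ℝ :=
  fun x => ∑' y, μ y * ν (y⁻¹ * x)

/-- Convolution powers: `μ^{*0} = δ_e`, `μ^{*(n+1)} = μ^{*n} ∗ μ`. -/
noncomputable def convPow {G : Type*} [Group G] (μ : G → ℝ) : ℕ → G → ℝ
  | 0 => Set.indicator ({1} : Set G) (fun _ => (1 : ℝ))
  | n + 1 => conv (convPow μ n) μ

/-- A measure `μ` is generating if every point gets positive mass from some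
convolution power `μ^{*n}`, `n ≥ 1`. -/
def IsGenerating {G : Type*} [Group G] (μ : G → ℝ) : Prop :=
  ∀ x : G, ∃ n : ℕ, 1 ≤ n ∧ 0 < convPow μ n x

/-- A measure `μ` is transient if its Green function `∑_n μ^{*n}(x)` is finite
(i.e. the series is summable) at every point. -/
def IsTransient {G : Type*} [Group G] (μ : G → ℝ) : Prop :=
  ∀ x : G, Summable fun n => convPow μ n x

/-- The Green function `G(x) = ∑_{n ≥ 0} μ^{*n}(x)`. -/
noncomputable def greenFn {G : Type*} [Group G] (μ : G → ℝ) : G → ℝ :=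
  fun x => ∑' n, convPow μ n x

/-- The Martin kernel `K(x, y) = G(y x⁻¹) / G(y)`. -/
noncomputable def martinKernel {G : Type*} [Group G] (μ : G → ℝ) (x y : G) : ℝ :=
  greenFn μ (y * x⁻¹) / greenFn μ y

/-- The pushforward of a measure `μ` on `Γ` to the quotient group `Γ/N`:
`μ̄(c) = ∑_{x : π(x) = c} μ(x)`. -/
noncomputable def pushforward {Γ : Type*} [Group Γ] (N : Subgroup Γ) [N.Normal]
    (μ : Γ → ℝ) : Γ ⧸ N → ℝ :=
  fun c => ∑' x : {x : Γ // (QuotientGroup.mk x : Γ ⧸ N) = c}, μ x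

/-!
Along an ultrafilter escaping to infinity the kernels `K(·, y)` converge pointwise, since Harnack's
inequality bounds them. As `μ` has finite support, the limit `h` is again harmonic, with `h 1 = 1`.

Every positive harmonic `h` is `N`-invariant: among the normalized ones let `g` attain the largest
value `c` taken on `N`, at the point `m`. As `x * m = (x * m * x⁻¹) * x`, the bound `c` for the
right translates of `g` gives `g (x * m) ≤ c * g x`, with equality at `x = 1`, hence everywhere by
the maximum principle. So `g (m ^ k) = c ^ k`, and `c = 1` because `m` has finite order.

Finally, `K̄(π(x), π(y))` is the quotient of the averages of `K(·, y)` over `N * x` and over `N`,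
which converge to `h x` and to `1` by the invariance of `h`.
-/

open Filter Topology MulOpposite

section Convolution

variable {Γ : Type*} [Group Γ]

lemma convPow_nonneg {μ : Γ → ℝ} (hμ : ∀ x, 0 ≤ μ x) (n : ℕ) (x : Γ) : 0 ≤ convPow μ n x := by
  induction n generalizing x with
  | zero => exact Set.indicator_nonneg (fun _ _ => zero_le_one) x
  | succ n ih => exact tsum_nonneg fun y => mul_nonneg (ih y) (hμ _)

lemma greenFn_pos {μ : Γ → ℝ} (hμ : ∀ x, 0 ≤ μ x) (hgen : IsGenerating μ)
    (htrans : IsTransient μ) (x : Γ) : 0 < greenFn μ x := by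
  obtain ⟨n, -, hn⟩ := hgen x
  exact (htrans x).tsum_pos (fun k => convPow_nonneg hμ k x) n hn

lemma conv_coeff (μ ν : MonoidAlgebra ℝ Γ) : conv μ.coeff ν.coeff = (μ * ν).coeff := by
  funext x
  rw [MonoidAlgebra.coeff_mul_apply_left]
  exact tsum_eq_sum fun y hy => by rw [Finsupp.notMem_support_iff.1 hy, zero_mul]

lemma convPow_coeff (μ : MonoidAlgebra ℝ Γ) (n : ℕ) : convPow μ.coeff n = (μ ^ n).coeff := by
  induction n with
  | zero =>
    classical
    funext x
    simp [convPow, Set.indicator_apply, MonoidAlgebra.one_def, Finsupp.single_apply, eq_comm]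
  | succ n ih => rw [convPow, ih, conv_coeff, pow_succ]

end Convolution

section Pushforward

variable {Γ : Type*} [Group Γ] {N : Subgroup Γ} [N.Normal]

lemma pushforward_coeff (μ : MonoidAlgebra ℝ Γ) :
    pushforward N μ.coeff = (μ.mapDomain (QuotientGroup.mk' N)).coeff := by
  classical
  funext c
  obtain ⟨z, rfl⟩ := QuotientGroup.mk'_surjective N c
  rw [MonoidAlgebra.coeff_mapDomain, Finsupp.mapDomain_apply_eq_sum, Finset.sum_filter]
  let fiber : Set Γ := {x | QuotientGroup.mk' N x = QuotientGroup.mk' N z}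
  calc pushforward N μ.coeff (QuotientGroup.mk' N z)
      = ∑' x, fiber.indicator μ.coeff x := tsum_subtype fiber μ.coeff
    _ = ∑ x ∈ μ.coeff.support, fiber.indicator μ.coeff x := tsum_eq_sum fun x hx =>
        Set.indicator_apply_eq_zero.2 fun _ => Finsupp.notMem_support_iff.1 hx
    _ = _ := by simp only [Set.indicator_apply, fiber, Set.mem_ofPred_eq]

lemma convPow_pushforward (μ : MonoidAlgebra ℝ Γ) (n : ℕ) :
    convPow (pushforward N μ.coeff) n = pushforward N (convPow μ.coeff n) := by
  rw [pushforward_coeff, convPow_coeff, convPow_coeff, pushforward_coeff]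
  exact congrArg (fun ν : MonoidAlgebra ℝ (Γ ⧸ N) => ⇑ν.coeff)
    (map_pow (MonoidAlgebra.mapDomainRingHom ℝ (QuotientGroup.mk' N)) μ n).symm

lemma pushforward_mk (f : Γ → ℝ) (z : Γ) :
    pushforward N f (QuotientGroup.mk z) = ∑' n : N, f (z * n) := by
  let fiberEquiv : N ≃ {x : Γ // (QuotientGroup.mk x : Γ ⧸ N) = QuotientGroup.mk z} :=
    (Subgroup.leftCosetEquivSubgroup z).symm.trans
      (Equiv.setCongr (QuotientGroup.eq_class_eq_leftCoset N z).symm)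
  exact (fiberEquiv.tsum_eq fun x => f x).symm

lemma greenFn_pushforward_mk [Fintype N] {μ : MonoidAlgebra ℝ Γ}
    (htrans : IsTransient μ.coeff) (z : Γ) :
    greenFn (pushforward N μ.coeff) (QuotientGroup.mk z) = ∑ n : N, greenFn μ.coeff (z * n) := by
  simp only [greenFn, convPow_pushforward, pushforward_mk, tsum_fintype]
  exact Summable.tsum_finsetSum fun n _ => htrans _

lemma martinKernel_pushforward_mk [Fintype N] {μ : MonoidAlgebra ℝ Γ}
    (htrans : IsTransient μ.coeff) {y : Γ} (hy : greenFn μ.coeff y ≠ 0) (x : Γ) :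
    martinKernel (pushforward N μ.coeff) (QuotientGroup.mk x) (QuotientGroup.mk y) =
      (∑ n : N, martinKernel μ.coeff (n * x) y) / ∑ n : N, martinKernel μ.coeff n y := by
  have green_eq (z : Γ) : greenFn (pushforward N μ.coeff) (QuotientGroup.mk z) =
      ∑ n : N, greenFn μ.coeff (z * (n : Γ)⁻¹) := by
    rw [greenFn_pushforward_mk htrans, ← Equiv.sum_comp (Equiv.inv N)]
    rfl
  simp only [martinKernel, ← Finset.sum_div, div_div_div_cancel_right₀ hy, mul_inv_rev,
    ← mul_assoc, ← QuotientGroup.mk_inv, ← QuotientGroup.mk_mul, green_eq]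

lemma tendsto_martinKernel_pushforward_mk [Finite N] {μ : MonoidAlgebra ℝ Γ}
    (htrans : IsTransient μ.coeff) (hG : ∀ y, greenFn μ.coeff y ≠ 0) {l : Filter Γ} {h : Γ → ℝ}
    (hK : ∀ x, Tendsto (martinKernel μ.coeff x) l (𝓝 (h x)))
    (h_inv : ∀ n ∈ N, ∀ x, h (n * x) = h x) (h_one : h 1 = 1) (x : Γ) :
    Tendsto (fun y : Γ => martinKernel (pushforward N μ.coeff) (QuotientGroup.mk x)
      (QuotientGroup.mk y)) l (𝓝 (h x)) := by
  have : Fintype N := .ofFinite N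
  have sum_tendsto (z : Γ) : Tendsto (fun y => ∑ n : N, martinKernel μ.coeff (n * z) y) l
      (𝓝 (Fintype.card N * h z)) := by
    have := tendsto_finsetSum Finset.univ fun (n : N) _ => hK (n * z)
    simpa [h_inv] using this
  have den_tendsto := sum_tendsto 1
  simp only [mul_one, h_one] at den_tendsto
  have hcard : (Fintype.card N : ℝ) ≠ 0 := Nat.cast_ne_zero.2 Fintype.card_ne_zero
  simp only [martinKernel_pushforward_mk htrans (hG _)]
  simpa [hcard] using! (sum_tendsto x).div den_tendsto hcard

end Pushforward

section MarkovOperator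

variable {Γ : Type*} [Group Γ]

/-- The action `h ↦ h (s * ·)` of `Γ` on functions by left translation. It is a right action, hence
a homomorphism into the opposite algebra. -/
def leftTranslation : Γ →* (Module.End ℝ (Γ → ℝ))ᵐᵒᵖ where
  toFun s := op (LinearMap.funLeft ℝ ℝ (s * ·))
  map_one' := congrArg op (LinearMap.ext fun h => funext fun x => by simp)
  map_mul' s t := congrArg op (LinearMap.ext fun h => funext fun x => by simp [mul_assoc])

/-- The Markov operator `(P h)(x) = ∑ s, μ(s) h(s x)`, whose steps multiply on the left: this makes
`x ↦ G(y x⁻¹)` harmonic away from `y`. It is the extension of `leftTranslation` to the group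
algebra, so that powers of `μ` act by powers of `P`. -/
noncomputable def markovOperator (μ : MonoidAlgebra ℝ Γ) : Module.End ℝ (Γ → ℝ) :=
  (MonoidAlgebra.lift ℝ _ Γ leftTranslation μ).unop

lemma markovOperator_apply (μ : MonoidAlgebra ℝ Γ) (h : Γ → ℝ) (x : Γ) :
    markovOperator μ h x = ∑ s ∈ μ.coeff.support, μ.coeff s * h (s * x) := by
  simp [markovOperator, leftTranslation, MonoidAlgebra.lift_apply, Finsupp.sum, LinearMap.sum_apply]

lemma markovOperator_pow (μ : MonoidAlgebra ℝ Γ) (n : ℕ) :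
    markovOperator (μ ^ n) = markovOperator μ ^ n := by
  simp [markovOperator]

lemma markovOperator_comp_mul_right (μ : MonoidAlgebra ℝ Γ) (h : Γ → ℝ) (z : Γ) :
    markovOperator μ (fun x => h (x * z)) = fun x => markovOperator μ h (x * z) := by
  funext x
  simp only [markovOperator_apply, mul_assoc]

lemma continuous_markovOperator (μ : MonoidAlgebra ℝ Γ) : Continuous (markovOperator μ) := by
  refine continuous_pi fun x => ?_
  simp only [markovOperator_apply]
  fun_prop

lemma mul_le_markovOperator {μ : MonoidAlgebra ℝ Γ} (hμ : ∀ x, 0 ≤ μ.coeff x) {h : Γ → ℝ}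
    (hh : 0 ≤ h) (x y : Γ) : μ.coeff x * h (x * y) ≤ markovOperator μ h y := by
  rw [markovOperator_apply]
  by_cases hx : x ∈ μ.coeff.support
  · exact Finset.single_le_sum (f := fun s => μ.coeff s * h (s * y))
      (fun s _ => mul_nonneg (hμ s) (hh _)) hx
  · rw [Finsupp.notMem_support_iff.1 hx, zero_mul]
    exact Finset.sum_nonneg fun s _ => mul_nonneg (hμ s) (hh _)

lemma monotone_markovOperator {μ : MonoidAlgebra ℝ Γ} (hμ : ∀ x, 0 ≤ μ.coeff x) :
    Monotone (markovOperator μ) := fun h₁ h₂ hle x => by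
  simp only [markovOperator_apply]
  exact Finset.sum_le_sum fun s _ => mul_le_mul_of_nonneg_left (hle _) (hμ s)

lemma markovOperator_convPow_mul_inv (μ : MonoidAlgebra ℝ Γ) (n : ℕ) (y : Γ) :
    markovOperator μ (fun x => convPow μ.coeff n (y * x⁻¹)) =
      fun x => convPow μ.coeff (n + 1) (y * x⁻¹) := by
  funext x
  simp only [markovOperator_apply, convPow_coeff, pow_succ, MonoidAlgebra.coeff_mul_apply_right,
    Finsupp.sum, mul_inv_rev, mul_assoc, mul_comm]

end MarkovOperator

section Excessive

variable {Γ : Type*} [Group Γ] {μ : MonoidAlgebra ℝ Γ} {h : Γ → ℝ}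

/-- Excessive functions, i.e. nonnegative superharmonic functions, of the random walk with step
distribution `μ`. -/
structure IsExcessive (μ : MonoidAlgebra ℝ Γ) (h : Γ → ℝ) : Prop where
  nonneg : 0 ≤ h
  markovOperator_le : markovOperator μ h ≤ h

namespace IsExcessive

lemma convPow_mul_le (hμ : ∀ x, 0 ≤ μ.coeff x) (hh : IsExcessive μ h) (n : ℕ) (x y : Γ) :
    convPow μ.coeff n x * h (x * y) ≤ h y := by
  have pow_nonneg (z : Γ) : 0 ≤ (μ ^ n).coeff z := convPow_coeff μ n ▸ convPow_nonneg hμ n z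
  calc convPow μ.coeff n x * h (x * y)
      ≤ markovOperator (μ ^ n) h y := by
        rw [convPow_coeff]
        exact mul_le_markovOperator pow_nonneg hh.nonneg x y
    _ = (markovOperator μ)^[n] h y := by rw [markovOperator_pow, Module.End.pow_apply]
    _ ≤ h y :=
        (monotone_markovOperator hμ).antitone_iterate_of_map_le hh.markovOperator_le n.zero_le y

lemma eq_zero_of_apply_eq_zero (hμ : ∀ x, 0 ≤ μ.coeff x) (hgen : IsGenerating μ.coeff)
    (hh : IsExcessive μ h) {y : Γ} (hy : h y = 0) : h = 0 := by
  funext x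
  obtain ⟨n, -, hn⟩ := hgen (x * y⁻¹)
  have hle := hh.convPow_mul_le hμ n (x * y⁻¹) y
  rw [inv_mul_cancel_right, hy] at hle
  exact le_antisymm (nonpos_of_mul_nonpos_right hle hn) (hh.nonneg x)

end IsExcessive

lemma exists_forall_isExcessive_apply_le (hμ : ∀ x, 0 ≤ μ.coeff x) (hgen : IsGenerating μ.coeff)
    (x : Γ) : ∃ C : ℝ, ∀ h, IsExcessive μ h → h x ≤ C * h 1 := by
  obtain ⟨n, -, hn⟩ := hgen x
  refine ⟨(convPow μ.coeff n x)⁻¹, fun h hh => ?_⟩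
  rw [le_inv_mul_iff₀ hn]
  simpa using hh.convPow_mul_le hμ n x 1

/-- The excessive functions normalized by `h 1 = 1`. -/
def normalizedExcessive (μ : MonoidAlgebra ℝ Γ) : Set (Γ → ℝ) :=
  {h | IsExcessive μ h ∧ h 1 = 1}

/-- The nonnegative harmonic functions normalized by `h 1 = 1`. -/
def normalizedHarmonic (μ : MonoidAlgebra ℝ Γ) : Set (Γ → ℝ) :=
  {h | 0 ≤ h ∧ markovOperator μ h = h ∧ h 1 = 1}

lemma normalizedHarmonic_subset_normalizedExcessive :
    normalizedHarmonic μ ⊆ normalizedExcessive μ :=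
  fun _ ⟨h_nonneg, h_harm, h_one⟩ => ⟨⟨h_nonneg, h_harm.le⟩, h_one⟩

lemma apply_pos_of_mem_normalizedExcessive (hμ : ∀ x, 0 ≤ μ.coeff x)
    (hgen : IsGenerating μ.coeff) (hh : h ∈ normalizedExcessive μ) (x : Γ) : 0 < h x := by
  refine (hh.1.nonneg x).lt_of_ne' fun hx => ?_
  have h_one := hh.2
  simp [hh.1.eq_zero_of_apply_eq_zero hμ hgen hx] at h_one

lemma isCompact_normalizedExcessive (hμ : ∀ x, 0 ≤ μ.coeff x) (hgen : IsGenerating μ.coeff) :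
    IsCompact (normalizedExcessive μ) := by
  choose C hC using exists_forall_isExcessive_apply_le hμ hgen
  refine (isCompact_univ_pi fun x => isCompact_Icc (a := 0) (b := C x)).of_isClosed_subset ?_ ?_
  · have h_eq : normalizedExcessive μ =
        {h | 0 ≤ h} ∩ {h | markovOperator μ h ≤ h} ∩ {h | h 1 = 1} :=
      Set.ext fun h => and_congr_left' ⟨fun hh => ⟨hh.1, hh.2⟩, fun hh => ⟨hh.1, hh.2⟩⟩
    rw [h_eq]
    exact ((isClosed_le continuous_const continuous_id).inter
      (isClosed_le (continuous_markovOperator μ) continuous_id)).inter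
      (isClosed_eq (continuous_apply 1) continuous_const)
  · intro h hh x _
    exact ⟨hh.1.nonneg x, by simpa [hh.2] using hC x h hh.1⟩

lemma isCompact_normalizedHarmonic (hμ : ∀ x, 0 ≤ μ.coeff x) (hgen : IsGenerating μ.coeff) :
    IsCompact (normalizedHarmonic μ) := by
  have h_eq : normalizedHarmonic μ = normalizedExcessive μ ∩ {h | markovOperator μ h = h} :=
    Set.ext fun h => ⟨fun hh => ⟨normalizedHarmonic_subset_normalizedExcessive hh, hh.2.1⟩,
      fun hh => ⟨hh.1.1.nonneg, hh.2, hh.1.2⟩⟩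
  rw [h_eq]
  exact (isCompact_normalizedExcessive hμ hgen).inter_right
    (isClosed_eq (continuous_markovOperator μ) continuous_id)

end Excessive

section Invariance

variable {Γ : Type*} [Group Γ] {μ : MonoidAlgebra ℝ Γ} {h : Γ → ℝ}

lemma translate_mem_normalizedHarmonic (hh : h ∈ normalizedHarmonic μ) {z : Γ} (hz : 0 < h z) :
    (h z)⁻¹ • (fun x => h (x * z)) ∈ normalizedHarmonic μ := by
  refine ⟨fun x => mul_nonneg (inv_nonneg.2 hz.le) (hh.1 _), ?_, by simp [hz.ne']⟩
  rw [map_smul, markovOperator_comp_mul_right, hh.2.1]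

lemma apply_mul_eq_of_forall_apply_mul_le (hμ : ∀ x, 0 ≤ μ.coeff x)
    (hgen : IsGenerating μ.coeff) (hh : h ∈ normalizedHarmonic μ) {m : Γ}
    (hle : ∀ x, h (x * m) ≤ h m * h x) (x : Γ) : h (x * m) = h m * h x := by
  have h_exc : IsExcessive μ (h m • h - fun x => h (x * m)) :=
    { nonneg := fun x => sub_nonneg.2 (hle x)
      markovOperator_le := by
        rw [map_sub, map_smul, markovOperator_comp_mul_right, hh.2.1] }
  have h_zero := h_exc.eq_zero_of_apply_eq_zero hμ hgen (y := 1) (by simp [hh.2.2])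
  exact (sub_eq_zero.1 (congrFun h_zero x)).symm

lemma apply_eq_one_of_forall_apply_mul_le (hμ : ∀ x, 0 ≤ μ.coeff x)
    (hgen : IsGenerating μ.coeff) (hh : h ∈ normalizedHarmonic μ) {m : Γ} (hm : IsOfFinOrder m)
    (hle : ∀ x, h (x * m) ≤ h m * h x) : h m = 1 := by
  have apply_pow (k : ℕ) : h (m ^ k) = h m ^ k := by
    induction k with
    | zero => rw [pow_zero, pow_zero, hh.2.2]
    | succ k ih =>
      rw [pow_succ, apply_mul_eq_of_forall_apply_mul_le hμ hgen hh hle, ih, pow_succ']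
  have h_pow := apply_pow (orderOf m)
  rw [pow_orderOf_eq_one, hh.2.2] at h_pow
  exact (pow_eq_one_iff_of_nonneg (hh.1 m) hm.orderOf_pos.ne').1 h_pow.symm

lemma exists_mem_normalizedHarmonic_forall_le (hμ : ∀ x, 0 ≤ μ.coeff x)
    (hgen : IsGenerating μ.coeff) (hne : (normalizedHarmonic μ).Nonempty)
    {T : Set Γ} (hT : T.Finite) (hTne : T.Nonempty) :
    ∃ g ∈ normalizedHarmonic μ, ∃ m ∈ T, ∀ f ∈ normalizedHarmonic μ, ∀ n ∈ T, f n ≤ g m := by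
  choose g hg g_max using fun n : Γ =>
    (isCompact_normalizedHarmonic hμ hgen).exists_isMaxOn hne (continuous_apply n).continuousOn
  obtain ⟨m, hm, m_max⟩ := T.exists_max_image (fun n => g n n) hT hTne
  exact ⟨g m, hg m, m, hm, fun f hf n hn => (g_max n hf).trans (m_max n hn)⟩

variable {N : Subgroup Γ} [N.Normal] [Finite N]

lemma apply_le_one_of_mem_normalizedHarmonic (hμ : ∀ x, 0 ≤ μ.coeff x)
    (hgen : IsGenerating μ.coeff) (hh : h ∈ normalizedHarmonic μ) {n : Γ} (hn : n ∈ N) :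
    h n ≤ 1 := by
  obtain ⟨g, hg, m, hm, le_g⟩ := exists_mem_normalizedHarmonic_forall_le hμ hgen ⟨h, hh⟩
    (Set.toFinite (N : Set Γ)) ⟨1, N.one_mem⟩
  have g_pos := apply_pos_of_mem_normalizedExcessive hμ hgen
    (normalizedHarmonic_subset_normalizedExcessive hg)
  have g_mul_le (x : Γ) : g (x * m) ≤ g m * g x := by
    have := le_g _ (translate_mem_normalizedHarmonic hg (g_pos x)) (x * m * x⁻¹)
      (Subgroup.Normal.conj_mem inferInstance m hm x)
    simpa [inv_mul_le_iff₀ (g_pos x), mul_comm (g m)] using this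
  have hm_fin : IsOfFinOrder m := N.subtype.isOfFinOrder (isOfFinOrder_of_finite (⟨m, hm⟩ : N))
  exact (le_g h hh n hn).trans_eq
    (apply_eq_one_of_forall_apply_mul_le hμ hgen hg hm_fin g_mul_le)

lemma apply_mul_eq_of_mem_normalizedHarmonic (hμ : ∀ x, 0 ≤ μ.coeff x)
    (hgen : IsGenerating μ.coeff) (hh : h ∈ normalizedHarmonic μ) {n : Γ} (hn : n ∈ N) (x : Γ) :
    h (n * x) = h x := by
  have apply_mul_le (n : Γ) (hn : n ∈ N) (x : Γ) : h (n * x) ≤ h x := by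
    have hx := apply_pos_of_mem_normalizedExcessive hμ hgen
      (normalizedHarmonic_subset_normalizedExcessive hh) x
    have := apply_le_one_of_mem_normalizedHarmonic hμ hgen
      (translate_mem_normalizedHarmonic hh hx) hn
    simpa [inv_mul_le_iff₀ hx] using this
  refine (apply_mul_le n hn x).antisymm ?_
  simpa using apply_mul_le n⁻¹ (N.inv_mem hn) (n * x)

end Invariance

section MartinKernel

variable {Γ : Type*} [Group Γ] {μ : MonoidAlgebra ℝ Γ}

lemma greenFn_eq_indicator_add {ν : Γ → ℝ} (htrans : IsTransient ν) (x : Γ) :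
    greenFn ν x = Set.indicator {1} (fun _ => 1) x + ∑' n, convPow ν (n + 1) x :=
  (htrans x).tsum_eq_zero_add

lemma markovOperator_greenFn_mul_inv (htrans : IsTransient μ.coeff) (x y : Γ) :
    markovOperator μ (fun x => greenFn μ.coeff (y * x⁻¹)) x =
      ∑' n, convPow μ.coeff (n + 1) (y * x⁻¹) := by
  simp only [← congrFun (markovOperator_convPow_mul_inv μ _ y) x, markovOperator_apply, greenFn,
    ← tsum_mul_left]
  exact (Summable.tsum_finsetSum fun s _ => (htrans _).mul_left _).symm

lemma martinKernel_eq_indicator_div_add (htrans : IsTransient μ.coeff) (x y : Γ) :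
    martinKernel μ.coeff x y = Set.indicator {1} (fun _ => 1) (y * x⁻¹) / greenFn μ.coeff y +
      markovOperator μ (martinKernel μ.coeff · y) x := by
  have kernel_eq : (martinKernel μ.coeff · y) =
      (greenFn μ.coeff y)⁻¹ • fun x => greenFn μ.coeff (y * x⁻¹) :=
    funext fun x => div_eq_inv_mul _ _
  rw [kernel_eq, map_smul, Pi.smul_apply, markovOperator_greenFn_mul_inv htrans, smul_eq_mul,
    ← div_eq_inv_mul, ← add_div, ← greenFn_eq_indicator_add htrans, martinKernel]

lemma martinKernel_mem_normalizedExcessive (hμ : ∀ x, 0 ≤ μ.coeff x)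
    (hgen : IsGenerating μ.coeff) (htrans : IsTransient μ.coeff) (y : Γ) :
    (martinKernel μ.coeff · y) ∈ normalizedExcessive μ := by
  have hG := greenFn_pos hμ hgen htrans
  refine ⟨⟨fun x => (div_pos (hG _) (hG _)).le, fun x => ?_⟩, by simp [martinKernel, (hG y).ne']⟩
  rw [martinKernel_eq_indicator_div_add htrans x y]
  exact le_add_of_nonneg_left
    (div_nonneg (Set.indicator_nonneg (fun _ _ => zero_le_one) _) (hG y).le)

lemma exists_mem_normalizedHarmonic_tendsto_martinKernel (hμ : ∀ x, 0 ≤ μ.coeff x)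
    (hgen : IsGenerating μ.coeff) (htrans : IsTransient μ.coeff) {U : Ultrafilter Γ}
    (hU : (U : Filter Γ) ≤ cofinite) :
    ∃ h ∈ normalizedHarmonic μ, ∀ x, Tendsto (martinKernel μ.coeff x) U (𝓝 (h x)) := by
  obtain ⟨h, hh, h_lim⟩ := (isCompact_normalizedExcessive hμ hgen).ultrafilter_le_nhds
    (U.map fun y x => martinKernel μ.coeff x y)
    (le_principal_iff.2 <| mem_map.2 <| univ_mem'
      (martinKernel_mem_normalizedExcessive hμ hgen htrans))
  have hK (x : Γ) : Tendsto (martinKernel μ.coeff x) U (𝓝 (h x)) := tendsto_pi_nhds.1 h_lim x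
  refine ⟨h, ⟨hh.1.nonneg, funext fun x => ?_, hh.2⟩, hK⟩
  have hPK : Tendsto (fun y => markovOperator μ (martinKernel μ.coeff · y) x) U
      (𝓝 (markovOperator μ h x)) :=
    tendsto_pi_nhds.1 (((continuous_markovOperator μ).tendsto h).comp h_lim) x
  refine tendsto_nhds_unique hPK ((hK x).congr' ?_)
  have ne_x : ∀ᶠ y in (U : Filter Γ), y ≠ x := hU (Set.finite_singleton x).compl_mem_cofinite
  filter_upwards [ne_x] with y hy
  rw [martinKernel_eq_indicator_div_add htrans x y]
  simp [mul_inv_eq_one, hy]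

end MartinKernel

theorem martin_kernel_agrees_with_quotient_general
    {Γ : Type*} [Group Γ] (N : Subgroup Γ) [N.Normal] [Finite N]
    (μ : Γ → ℝ) (hμ0 : ∀ x, 0 ≤ μ x) (hfin : (Function.support μ).Finite)
    (hgen : IsGenerating μ) (htrans : IsTransient μ) (x : Γ) :
    Tendsto
      (fun y : Γ => martinKernel μ x y -
        martinKernel (pushforward N μ) (QuotientGroup.mk x) (QuotientGroup.mk y))
      cofinite (𝓝 0) := by
  obtain ⟨μ, rfl⟩ : ∃ ν : MonoidAlgebra ℝ Γ, ⇑ν.coeff = μ :=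
    ⟨.ofCoeff (.ofSupportFinite μ hfin), rfl⟩
  rw [tendsto_iff_ultrafilter]
  intro U hU
  obtain ⟨h, hh, hK⟩ := exists_mem_normalizedHarmonic_tendsto_martinKernel hμ0 hgen htrans hU
  have hK' := tendsto_martinKernel_pushforward_mk (N := N) htrans
    (fun y => (greenFn_pos hμ0 hgen htrans y).ne') hK
    (fun n hn => apply_mul_eq_of_mem_normalizedHarmonic hμ0 hgen hh hn) hh.2.2 x
  simpa using (hK x).sub hK'

/-- Identification of the Martin boundary of `Γ` with that of `Γ/N`: for a
finitely supported, generating, transient probability measure `μ` on a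
countable group `Γ` with finite normal subgroup `N`, the Martin kernel of `μ`
asymptotically agrees with the Martin kernel of the pushforward measure `μ̄`
on `Γ/N`: for every `x`, `y ↦ K(x, y) - K̄(π(x), π(y))` vanishes at
infinity. -/
theorem martin_kernel_agrees_with_quotient
    {Γ : Type*} [Group Γ] [Countable Γ]
    (N : Subgroup Γ) [N.Normal] [Finite N]
    (μ : Γ → ℝ) (hμ0 : ∀ x, 0 ≤ μ x) (hμ1 : HasSum μ 1)
    (hfin : (Function.support μ).Finite)
    (hgen : IsGenerating μ) (htrans : IsTransient μ) :
    ∀ x : Γ,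
      Filter.Tendsto
        (fun y : Γ => martinKernel μ x y -
          martinKernel (pushforward N μ) (QuotientGroup.mk x) (QuotientGroup.mk y))
        Filter.cofinite (nhds 0) := by
  exact martin_kernel_agrees_with_quotient_general N μ hμ0 hfin hgen htrans
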